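/- Capacity of perfectly smooth LDCs (Corollary 1): for all integers N ≥ 2 and K ≥ 1, the supremum over all code lengths M ∈ ℕ and over all perfectly smooth locally decodable codes (SLDCs) with locality N and K source symbols of the symbol rate R_s = L_w/L_x equals C*(N,K) = N·(1 + 1/N + 1/N² + ⋯ + 1/N^{K−1})^{−1}, and this supremum is attained by some SLDC. -/

import Mathlib

open scoped BigOperators

noncomputable section

/-- A finite probability space: a finite type together with a probability mass function. -/
structure FinProbSpace where
  Ω : Type
  [fin : Fintype Ω]
  p : Ω → ℝ
  nonneg : ∀ ω, 0 ≤ p ω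
  sum_one : ∑ ω, p ω = 1

attribute [instance] FinProbSpace.fin

namespace FinProbSpace

variable (P : FinProbSpace)

/-- Probability that the random variable `X` takes the value `a`. -/
def prob {α : Type} [DecidableEq α] (X : P.Ω → α) (a : α) : ℝ :=
  ∑ ω, if X ω = a then P.p ω else 0

/-- Shannon entropy (in bits) of a finitely valued random variable. -/
def H {α : Type} [Fintype α] [DecidableEq α] (X : P.Ω → α) : ℝ :=
  ∑ a, -(P.prob X a * Real.logb 2 (P.prob X a))

/-- Conditional Shannon entropy `H(X | Y) = H(X, Y) - H(Y)` (in bits). -/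
def condH {α β : Type} [Fintype α] [DecidableEq α] [Fintype β] [DecidableEq β]
    (X : P.Ω → α) (Y : P.Ω → β) : ℝ :=
  P.H (fun ω => (X ω, Y ω)) - P.H Y

/-- The tuple random variable `(X_i)_{i ∈ ι}`. -/
def tuple {ι V : Type} (X : ι → P.Ω → V) : P.Ω → ι → V := fun ω i => X i ω

/-- Joint (mutual) independence of a finite family of random variables. -/
def iIndep {ι V : Type} [Fintype ι] [DecidableEq ι] [DecidableEq V] (X : ι → P.Ω → V) : Prop :=
  ∀ a : ι → V, P.prob (P.tuple X) a = ∏ i, P.prob (X i) (a i)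

/-- `X` and `Y` contain the same information about everything beyond `Z`:
`H(X | Y, Z) = H(Y | X, Z) = 0`. -/
def sameInfo {α β γ : Type} [Fintype α] [DecidableEq α] [Fintype β] [DecidableEq β]
    [Fintype γ] [DecidableEq γ] (X : P.Ω → α) (Y : P.Ω → β) (Z : P.Ω → γ) : Prop :=
  P.condH X (fun ω => (Y ω, Z ω)) = 0 ∧ P.condH Y (fun ω => (X ω, Z ω)) = 0

end FinProbSpace

/-- A locally decodable code with `K` source symbols of entropy `Lw`, `M` coded symbols of
entropy `Lx`, and locality `N`. -/
structure LDC (K N M : ℕ) (Lw Lx : ℝ) where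
  P : FinProbSpace
  V : Type
  [fV : Fintype V]
  [dV : DecidableEq V]
  V' : Type
  [fV' : Fintype V']
  [dV' : DecidableEq V']
  /-- the source symbols -/
  W : Fin K → P.Ω → V
  /-- the coded symbols -/
  X : Fin M → P.Ω → V'
  indep : P.iIndep W
  HW : ∀ k, P.H (W k) = Lw
  coded_fn : ∀ m, ∃ f : (Fin K → V) → V', ∀ ω, X m ω = f (fun k => W k ω)
  HX : ∀ m, P.H (X m) = Lx
  /-- the decoding supersets -/
  decSets : Fin K → Finset (Finset (Fin M))
  decSets_nonempty : ∀ k, (decSets k).Nonempty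
  decSets_card : ∀ k, ∀ s ∈ decSets k, s.card = N
  decodes : ∀ k, ∀ s ∈ decSets k,
    P.condH (W k) (P.tuple fun i : {x // x ∈ s} => X i.1) = 0

attribute [instance] LDC.fV LDC.dV LDC.fV' LDC.dV'

/-- A universal LDC: every coded symbol appears in some decoding set of every source symbol. -/
def LDC.IsUniversal {K N M : ℕ} {Lw Lx : ℝ} (C : LDC K N M Lw Lx) : Prop :=
  ∀ (m : Fin M) (k : Fin K), ∃ s ∈ C.decSets k, m ∈ s

/-- A perfectly smooth LDC: for each source symbol, every coded symbol lies in the same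
number of decoding sets. -/
def LDC.IsSmooth {K N M : ℕ} {Lw Lx : ℝ} (C : LDC K N M Lw Lx) : Prop :=
  ∀ (k : Fin K) (m m' : Fin M),
    ((C.decSets k).filter (fun s => m ∈ s)).card =
      ((C.decSets k).filter (fun s => m' ∈ s)).card

/-- `C*(N, K) = N (1 + 1/N + ⋯ + 1/N^{K-1})⁻¹`. -/
def Cstar (N K : ℕ) : ℝ := N / (∑ j ∈ Finset.range K, (1 / (N : ℝ)) ^ j)

/-- An `N`-query information retrieval scheme with `K` messages of entropy `Lw` and
answer sets of sizes `Mn n` with answers of entropy `Lx`. -/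
structure IRScheme (K N : ℕ) (Mn : Fin N → ℕ) (Lw Lx : ℝ) where
  P : FinProbSpace
  V : Type
  [fV : Fintype V]
  [dV : DecidableEq V]
  V' : Type
  [fV' : Fintype V']
  [dV' : DecidableEq V']
  /-- the messages -/
  W : Fin K → P.Ω → V
  /-- `A n m` is the `m`-th possible answer of database `n` -/
  A : (n : Fin N) → Fin (Mn n) → P.Ω → V'
  indep : P.iIndep W
  HW : ∀ k, P.H (W k) = Lw
  ans_fn : ∀ n m, ∃ f : (Fin K → V) → V', ∀ ω, A n m ω = f (fun k => W k ω)
  HA : ∀ n m, P.H (A n m) = Lx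
  /-- the decoding supersets: each decoding set consists of one answer index per database -/
  Q : Fin K → Finset ((n : Fin N) → Fin (Mn n))
  Q_nonempty : ∀ k, (Q k).Nonempty
  decodes : ∀ k, ∀ q ∈ Q k, P.condH (W k) (P.tuple fun n => A n (q n)) = 0

attribute [instance] IRScheme.fV IRScheme.dV IRScheme.fV' IRScheme.dV'

/-- A repudiative (RIR_max) scheme: every possible answer of every database appears in some
decoding set of every message. -/
def IRScheme.IsRIR {K N : ℕ} {Mn : Fin N → ℕ} {Lw Lx : ℝ} (C : IRScheme K N Mn Lw Lx) : Prop :=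
  ∀ (n : Fin N) (m : Fin (Mn n)) (k : Fin K), ∃ q ∈ C.Q k, q n = m

/-- A perfectly private (PIR_max) scheme: for each message there is a distribution on its
decoding sets such that the marginal distribution of the query to each database does not
depend on the message. -/
def IRScheme.IsPIR {K N : ℕ} {Mn : Fin N → ℕ} {Lw Lx : ℝ} (C : IRScheme K N Mn Lw Lx) : Prop :=
  ∃ μ : Fin K → ((n : Fin N) → Fin (Mn n)) → ℝ,
    (∀ k q, 0 ≤ μ k q) ∧ (∀ k, ∑ q ∈ C.Q k, μ k q = 1) ∧
    (∀ (k k' : Fin K) (n : Fin N) (m : Fin (Mn n)),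
      ∑ q ∈ (C.Q k).filter (fun q => q n = m), μ k q =
        ∑ q ∈ (C.Q k').filter (fun q => q n = m), μ k' q)

/-- `C_K(N) = (1 + 1/N + ⋯ + 1/N^{K-1})⁻¹`, the capacity of PIR. -/
def CK (N K : ℕ) : ℝ := (∑ j ∈ Finset.range K, (1 / (N : ℝ)) ^ j)⁻¹

namespace FinProbSpace

variable (P : FinProbSpace)

section Entropy

variable {α β γ : Type} [DecidableEq α] [DecidableEq β] [DecidableEq γ]

lemma prob_nonneg (X : P.Ω → α) (a : α) : 0 ≤ P.prob X a :=
  Finset.sum_nonneg fun ω _ => by split_ifs <;> simp [P.nonneg]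

lemma le_prob_self (X : P.Ω → α) (ω : P.Ω) : P.p ω ≤ P.prob X (X ω) := by
  have h := Finset.single_le_sum (f := fun ω' => if X ω' = X ω then P.p ω' else 0)
    (fun ω' _ => by split_ifs <;> simp [P.nonneg]) (Finset.mem_univ ω)
  simpa [prob] using h

lemma sum_p_mul_comp [Fintype α] (X : P.Ω → α) (g : α → ℝ) :
    ∑ ω, P.p ω * g (X ω) = ∑ a, P.prob X a * g a := by
  simp only [prob, Finset.sum_mul, ite_mul, zero_mul]
  rw [Finset.sum_comm]
  simp

lemma sum_prob [Fintype α] (X : P.Ω → α) : ∑ a, P.prob X a = 1 := by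
  have h := P.sum_p_mul_comp X fun _ => 1
  simpa [P.sum_one] using h.symm

lemma sum_prob_pair [Fintype α] (X : P.Ω → α) (Z : P.Ω → γ) (c : γ) :
    ∑ a, P.prob (fun ω => (X ω, Z ω)) (a, c) = P.prob Z c := by
  simp only [prob, Prod.mk.injEq, ite_and]
  rw [Finset.sum_comm]
  simp

lemma H_eq_sum [Fintype α] (X : P.Ω → α) :
    P.H X = ∑ ω, P.p ω * -Real.logb 2 (P.prob X (X ω)) := by
  rw [P.sum_p_mul_comp X fun a => -Real.logb 2 (P.prob X a)]
  simp [H]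

/-- Entropy is monotone: a coarser random variable has smaller entropy. -/
lemma H_mono [Fintype α] [Fintype β] {X : P.Ω → α} {Y : P.Ω → β}
    (h : ∀ ω ω', Y ω = Y ω' → X ω = X ω') : P.H X ≤ P.H Y := by
  rw [H_eq_sum, H_eq_sum]
  refine Finset.sum_le_sum fun ω _ => ?_
  rcases (P.nonneg ω).eq_or_lt with h0 | h0
  · simp [← h0]
  refine mul_le_mul_of_nonneg_left (neg_le_neg ?_) h0.le
  refine Real.logb_le_logb_of_le one_lt_two (h0.trans_le (P.le_prob_self Y ω)) ?_
  refine Finset.sum_le_sum fun ω' _ => ?_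
  by_cases hY : Y ω' = Y ω
  · simp [hY, h _ _ hY]
  · rw [if_neg hY]
    split_ifs <;> simp [P.nonneg]

/-- Random variables inducing the same partition have the same entropy. -/
lemma H_congr [Fintype α] [Fintype β] {X : P.Ω → α} {Y : P.Ω → β}
    (h : ∀ ω ω', X ω = X ω' ↔ Y ω = Y ω') : P.H X = P.H Y :=
  le_antisymm (P.H_mono fun _ _ => (h _ _).2) (P.H_mono fun _ _ => (h _ _).1)

lemma H_eq_zero_of_const [Fintype α] {X : P.Ω → α} (h : ∀ ω ω', X ω = X ω') : P.H X = 0 := by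
  rw [H_eq_sum]
  refine Finset.sum_eq_zero fun ω _ => ?_
  have : P.prob X (X ω) = 1 := by simp [prob, fun ω' => h ω' ω, P.sum_one]
  simp [this]

lemma condH_eq_zero_of_determined [Fintype α] [Fintype β] {X : P.Ω → α} {Y : P.Ω → β}
    (h : ∀ ω ω', Y ω = Y ω' → X ω = X ω') : P.condH X Y = 0 := by
  rw [condH, sub_eq_zero]
  exact P.H_congr fun ω ω' => by simpa using h ω ω'

lemma sum_ratio_le_one [Fintype α] [Fintype β] [Fintype γ]
    (X : P.Ω → α) (Y : P.Ω → β) (Z : P.Ω → γ) :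
    ∑ ω, P.p ω * (P.prob (fun ω => (X ω, Z ω)) (X ω, Z ω) *
      P.prob (fun ω => (Y ω, Z ω)) (Y ω, Z ω) /
      (P.prob (fun ω => (X ω, Y ω, Z ω)) (X ω, Y ω, Z ω) * P.prob Z (Z ω))) ≤ 1 := by
  rw [P.sum_p_mul_comp (fun ω => (X ω, Y ω, Z ω)) fun t =>
    P.prob (fun ω => (X ω, Z ω)) (t.1, t.2.2) * P.prob (fun ω => (Y ω, Z ω)) (t.2.1, t.2.2) /
      (P.prob (fun ω => (X ω, Y ω, Z ω)) t * P.prob Z t.2.2)]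
  calc _ ≤ ∑ t : α × β × γ, P.prob (fun ω => (X ω, Z ω)) (t.1, t.2.2) *
        P.prob (fun ω => (Y ω, Z ω)) (t.2.1, t.2.2) / P.prob Z t.2.2 := by
        refine Finset.sum_le_sum fun t _ => ?_
        have h1 := P.prob_nonneg (fun ω => (X ω, Z ω)) (t.1, t.2.2)
        have h2 := P.prob_nonneg (fun ω => (Y ω, Z ω)) (t.2.1, t.2.2)
        have h3 := P.prob_nonneg Z t.2.2
        rcases eq_or_ne (P.prob (fun ω => (X ω, Y ω, Z ω)) t) 0 with h | h
        · rw [h, zero_mul]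
          positivity
        · rw [← mul_div_assoc, mul_div_mul_left _ _ h]
    _ = ∑ c, P.prob Z c * P.prob Z c / P.prob Z c := by
        simp only [Fintype.sum_prod_type]
        calc _ = ∑ a, ∑ c, ∑ b, P.prob (fun ω => (X ω, Z ω)) (a, c) *
              P.prob (fun ω => (Y ω, Z ω)) (b, c) / P.prob Z c :=
              Finset.sum_congr rfl fun a _ => Finset.sum_comm
          _ = ∑ c, ∑ a, ∑ b, P.prob (fun ω => (X ω, Z ω)) (a, c) *
              P.prob (fun ω => (Y ω, Z ω)) (b, c) / P.prob Z c := Finset.sum_comm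
          _ = _ := by
              simp only [← Finset.sum_div, ← Finset.mul_sum, ← Finset.sum_mul, sum_prob_pair]
    _ = 1 := by simp [sum_prob]

/-- Submodularity of entropy. -/
lemma H_submodular [Fintype α] [Fintype β] [Fintype γ]
    (X : P.Ω → α) (Y : P.Ω → β) (Z : P.Ω → γ) :
    P.H (fun ω => (X ω, Y ω, Z ω)) + P.H Z ≤
      P.H (fun ω => (X ω, Z ω)) + P.H (fun ω => (Y ω, Z ω)) := by
  have hpt : ∀ ω, P.p ω *
      (Real.log (P.prob (fun ω => (X ω, Z ω)) (X ω, Z ω)) +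
        Real.log (P.prob (fun ω => (Y ω, Z ω)) (Y ω, Z ω)) -
        Real.log (P.prob (fun ω => (X ω, Y ω, Z ω)) (X ω, Y ω, Z ω)) -
        Real.log (P.prob Z (Z ω))) ≤
      P.p ω * (P.prob (fun ω => (X ω, Z ω)) (X ω, Z ω) *
        P.prob (fun ω => (Y ω, Z ω)) (Y ω, Z ω) /
        (P.prob (fun ω => (X ω, Y ω, Z ω)) (X ω, Y ω, Z ω) * P.prob Z (Z ω))) - P.p ω := by
    intro ω
    rcases (P.nonneg ω).eq_or_lt with h0 | h0
    · simp [← h0]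
    have h1 := h0.trans_le (P.le_prob_self (fun ω => (X ω, Z ω)) ω)
    have h2 := h0.trans_le (P.le_prob_self (fun ω => (Y ω, Z ω)) ω)
    have h3 := h0.trans_le (P.le_prob_self (fun ω => (X ω, Y ω, Z ω)) ω)
    have h4 := h0.trans_le (P.le_prob_self Z ω)
    have h5 := Real.log_le_sub_one_of_pos (div_pos (mul_pos h1 h2) (mul_pos h3 h4))
    rw [Real.log_div (mul_pos h1 h2).ne' (mul_pos h3 h4).ne', Real.log_mul h1.ne' h2.ne',
      Real.log_mul h3.ne' h4.ne'] at h5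
    have h6 := mul_le_mul_of_nonneg_left h5 h0.le
    linarith
  have hsum := Finset.sum_le_sum fun ω (_ : ω ∈ Finset.univ) => hpt ω
  rw [Finset.sum_sub_distrib, P.sum_one] at hsum
  have hle := P.sum_ratio_le_one X Y Z
  have hlog : (0 : ℝ) < Real.log 2 := Real.log_pos one_lt_two
  rw [← sub_nonneg, H_eq_sum, H_eq_sum, H_eq_sum, H_eq_sum, ← Finset.sum_add_distrib,
    ← Finset.sum_add_distrib, ← Finset.sum_sub_distrib]
  refine nonneg_of_mul_nonneg_left (b := Real.log 2) ?_ hlog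
  rw [Finset.sum_mul, ← neg_nonpos, ← Finset.sum_neg_distrib]
  refine le_trans (le_of_eq ?_) (hsum.trans (sub_nonpos.2 hle))
  refine Finset.sum_congr rfl fun ω _ => ?_
  simp only [Real.logb]
  field_simp
  ring

end Entropy

section Tuple

variable {ι V γ : Type}

/-- The subfamily of `X` indexed by `S`, viewed as one random variable. -/
abbrev subtuple (X : ι → P.Ω → V) (S : Finset ι) : P.Ω → {i // i ∈ S} → V :=
  P.tuple fun i : {i // i ∈ S} => X i.1

lemma subtuple_eq_iff (X : ι → P.Ω → V) (S : Finset ι) (ω ω' : P.Ω) :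
    P.subtuple X S ω = P.subtuple X S ω' ↔ ∀ i ∈ S, X i ω = X i ω' := by
  simp [subtuple, tuple, funext_iff]

variable [DecidableEq ι] [Fintype V] [DecidableEq V] [Fintype γ] [DecidableEq γ]

lemma H_subtuple_sub_le (X : ι → P.Ω → V) (Z : P.Ω → γ) (S : Finset ι) :
    P.H (fun ω => (P.subtuple X S ω, Z ω)) - P.H Z ≤
      ∑ i ∈ S, (P.H (fun ω => (X i ω, Z ω)) - P.H Z) := by
  induction S using Finset.induction_on with
  | empty =>
    rw [Finset.sum_empty, sub_nonpos]
    exact P.H_mono fun ω ω' h => by simp [subtuple_eq_iff, h]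
  | insert a S ha ih =>
    rw [Finset.sum_insert ha]
    have h := P.H_submodular (X a) (P.subtuple X S) Z
    have h' : P.H (fun ω => (P.subtuple X (insert a S) ω, Z ω)) =
        P.H (fun ω => (X a ω, P.subtuple X S ω, Z ω)) :=
      P.H_congr fun ω ω' => by simp [subtuple_eq_iff, and_assoc]
    linarith

lemma H_pair_le (X : P.Ω → V) (Z : P.Ω → γ) :
    P.H (fun ω => (X ω, Z ω)) ≤ P.H X + P.H Z := by
  have h := P.H_submodular X Z fun _ => ()
  have h0 : P.H (fun _ => ()) = 0 := P.H_eq_zero_of_const fun _ _ => rfl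
  have h1 : P.H (fun ω => (X ω, Z ω, ())) = P.H (fun ω => (X ω, Z ω)) :=
    P.H_congr fun _ _ => by simp
  have h2 : P.H (fun ω => (X ω, ())) = P.H X := P.H_congr fun _ _ => by simp
  have h3 : P.H (fun ω => (Z ω, ())) = P.H Z := P.H_congr fun _ _ => by simp
  linarith

lemma H_subtuple_pair_le (X : ι → P.Ω → V) (Z : P.Ω → γ) (S : Finset ι) :
    P.H (fun ω => (P.subtuple X S ω, Z ω)) ≤ ∑ i ∈ S, P.H (X i) + P.H Z := by
  have h := (P.H_subtuple_sub_le X Z S).trans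
    (Finset.sum_le_sum fun i _ => sub_le_iff_le_add.2 (P.H_pair_le (X i) Z))
  linarith

lemma H_subtuple_le (X : ι → P.Ω → V) (S : Finset ι) :
    P.H (P.subtuple X S) ≤ ∑ i ∈ S, P.H (X i) := by
  have h := P.H_subtuple_pair_le X (fun _ => ()) S
  have h0 : P.H (fun _ => ()) = 0 := P.H_eq_zero_of_const fun _ _ => rfl
  have h1 : P.H (fun ω => (P.subtuple X S ω, ())) = P.H (P.subtuple X S) :=
    P.H_congr fun _ _ => by simp
  linarith

variable [Fintype ι]

lemma H_tuple_of_iIndep {X : ι → P.Ω → V} (hX : P.iIndep X) :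
    P.H (P.tuple X) = ∑ i, P.H (X i) := by
  simp only [H_eq_sum]
  rw [Finset.sum_comm]
  refine Finset.sum_congr rfl fun ω _ => ?_
  rcases (P.nonneg ω).eq_or_lt with h0 | h0
  · simp [← h0]
  rw [hX]
  change P.p ω * -Real.logb 2 (∏ i, P.prob (X i) (X i ω)) = _
  rw [Real.logb_prod (hf := fun i _ => (h0.trans_le (P.le_prob_self (X i) ω)).ne'),
    ← Finset.sum_neg_distrib, Finset.mul_sum]

/-- A member of an independent family keeps its full entropy given other members. -/
lemma H_add_le_H_insert {X : ι → P.Ω → V} (hX : P.iIndep X) {T : Finset ι} {j : ι} (hj : j ∉ T) :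
    P.H (P.subtuple X T) + P.H (X j) ≤ P.H (P.subtuple X (insert j T)) := by
  have h1 := P.H_subtuple_le X T
  have h2 := P.H_subtuple_pair_le X (P.subtuple X (insert j T)) (insert j T)ᶜ
  have h3 : P.H (fun ω => (P.subtuple X (insert j T)ᶜ ω, P.subtuple X (insert j T) ω)) =
      P.H (P.tuple X) := by
    refine P.H_congr fun ω ω' => ?_
    rw [Prod.mk.injEq, subtuple_eq_iff, subtuple_eq_iff]
    simp only [tuple, funext_iff, Finset.mem_compl]
    exact ⟨fun h i => (em (i ∈ insert j T)).elim (h.2 i) (h.1 i),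
      fun h => ⟨fun i _ => h i, fun i _ => h i⟩⟩
  have h4 := P.H_tuple_of_iIndep hX
  have h5 := Finset.sum_add_sum_compl (insert j T) fun i => P.H (X i)
  rw [Finset.sum_insert hj] at h5
  linarith

end Tuple

section Uniform

/-- The uniform distribution on a finite nonempty type. -/
abbrev uniform (A : Type) [Fintype A] [Nonempty A] : FinProbSpace where
  Ω := A
  p _ := (Fintype.card A : ℝ)⁻¹
  nonneg _ := by positivity
  sum_one := by simp

variable {A B : Type} [AddGroup A] [Fintype A] [AddGroup B] [Fintype B] [DecidableEq B]

/-- A surjective homomorphism maps the uniform distribution to the uniform distribution. -/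
lemma prob_uniform_hom {f : A →+ B} (hf : Function.Surjective f) (b : B) :
    (uniform A).prob f b = (Fintype.card B : ℝ)⁻¹ := by
  have hconst : ∀ c, (uniform A).prob f c = (uniform A).prob f b := by
    intro c
    obtain ⟨t, ht⟩ := hf (-c + b)
    refine Fintype.sum_equiv (Equiv.addRight t) _ _ fun (a : A) => ?_
    have : f a = c ↔ f (a + t) = b := by
      rw [map_add, ht, ← add_assoc, add_eq_right, ← sub_eq_add_neg, sub_eq_zero]
    exact if_congr this rfl rfl
  have hsum := (uniform A).sum_prob f
  rw [Finset.sum_congr rfl fun c _ => hconst c, Finset.sum_const, nsmul_eq_mul] at hsum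
  exact eq_inv_of_mul_eq_one_right hsum

lemma H_uniform_hom {f : A →+ B} (hf : Function.Surjective f) :
    (uniform A).H f = Real.logb 2 (Fintype.card B) := by
  simp only [H, prob_uniform_hom hf, Finset.sum_const, Finset.card_univ, nsmul_eq_mul,
    Real.logb_inv]
  have : (Fintype.card B : ℝ) ≠ 0 := by simp
  field_simp

end Uniform

end FinProbSpace

namespace LDC

variable {K N M : ℕ} {Lw Lx : ℝ}

lemma IsSmooth.isUniversal {C : LDC K N M Lw Lx} (hC : C.IsSmooth) (hN : 1 ≤ N) :
    C.IsUniversal := by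
  intro m k
  obtain ⟨s, hs⟩ := C.decSets_nonempty k
  obtain ⟨m', hm'⟩ := Finset.card_pos.1 (hN.trans_eq (C.decSets_card k s hs).symm)
  have hpos : 0 < ((C.decSets k).filter (fun s => m ∈ s)).card := by
    rw [hC k m m']
    exact Finset.card_pos.2 ⟨s, Finset.mem_filter.2 ⟨hs, hm'⟩⟩
  obtain ⟨t, ht⟩ := Finset.card_pos.1 hpos
  exact ⟨t, Finset.mem_filter.1 ht⟩

/-- Decoding `W j` from `X_S` splits off `Lw` bits, also given other source symbols. -/
lemma add_le_condH_decSet (C : LDC K N M Lw Lx) {T : Finset (Fin K)} {j : Fin K} (hj : j ∉ T)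
    {s : Finset (Fin M)} (hs : s ∈ C.decSets j) {m : Fin M} (hm : m ∈ s) :
    Lw + C.P.condH (C.X m) (C.P.subtuple C.W (insert j T)) ≤
      C.P.condH (C.P.subtuple C.X s) (C.P.subtuple C.W T) := by
  have hdec := C.decodes j s hs
  unfold FinProbSpace.condH at hdec ⊢
  have h1 := C.P.H_add_le_H_insert C.indep hj
  rw [C.HW] at h1
  have h2 := C.P.H_submodular (C.W j) (C.P.subtuple C.W T) (C.P.subtuple C.X s)
  have h3 : C.P.H (fun ω => (C.P.subtuple C.W T ω, C.P.subtuple C.X s ω)) =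
      C.P.H (fun ω => (C.P.subtuple C.X s ω, C.P.subtuple C.W T ω)) :=
    C.P.H_congr fun ω ω' => by simp [and_comm]
  have h4 : C.P.H (fun ω => (C.X m ω, C.P.subtuple C.W (insert j T) ω)) ≤
      C.P.H (fun ω => (C.W j ω, C.P.subtuple C.W T ω, C.P.subtuple C.X s ω)) := by
    refine C.P.H_mono fun ω ω' h => ?_
    simp only [Prod.mk.injEq, FinProbSpace.subtuple_eq_iff, Finset.mem_insert,
      forall_eq_or_imp] at h ⊢
    exact ⟨h.2.2 m hm, h.1, h.2.1⟩
  linarith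

lemma IsUniversal.exists_le_condH {C : LDC K N M Lw Lx} (hC : C.IsUniversal) (hN : 1 ≤ N)
    (m₀ : Fin M) (n : ℕ) (T : Finset (Fin K)) (hT : T.card + n = K) :
    ∃ m, Lw / N * ∑ i ∈ Finset.range n, (1 / (N : ℝ)) ^ i ≤
      C.P.condH (C.X m) (C.P.subtuple C.W T) := by
  induction n generalizing T with
  | zero =>
    refine ⟨m₀, ?_⟩
    simp only [Finset.range_zero, Finset.sum_empty, mul_zero, FinProbSpace.condH, sub_nonneg]
    exact C.P.H_mono fun ω ω' h => (Prod.mk.inj h).2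
  | succ n ih =>
    obtain ⟨j, hj⟩ : ∃ j, j ∉ T := by
      by_contra! h
      have := Finset.card_le_card (fun j _ => h j : (Finset.univ : Finset (Fin K)) ⊆ T)
      rw [Finset.card_fin] at this
      omega
    obtain ⟨m, hm⟩ := ih (insert j T) (by rw [Finset.card_insert_of_notMem hj]; omega)
    obtain ⟨s, hs, hms⟩ := hC m j
    have h1 := C.add_le_condH_decSet hj hs hms
    have h2 := C.P.H_subtuple_sub_le C.X (C.P.subtuple C.W T) s
    have hN0 : (0 : ℝ) < N := by exact_mod_cast hN
    by_contra! hlt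
    have h3 := Finset.sum_lt_sum_of_nonempty ⟨m, hms⟩ fun i (_ : i ∈ s) => hlt i
    rw [Finset.sum_const, C.decSets_card j s hs, nsmul_eq_mul, Finset.sum_range_succ'] at h3
    simp only [pow_succ, ← Finset.sum_mul, pow_zero] at h3
    have h4 : (N : ℝ) * (Lw / N * ((∑ i ∈ Finset.range n, (1 / (N : ℝ)) ^ i) * (1 / N) + 1)) =
        Lw + Lw / N * ∑ i ∈ Finset.range n, (1 / (N : ℝ)) ^ i := by
      field_simp
      ring
    unfold FinProbSpace.condH at h1 h3 hm
    linarith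

/-- The rate of a universal LDC is at most `Cstar N K`. -/
lemma IsUniversal.rate_le {C : LDC K N M Lw Lx} (hC : C.IsUniversal) (hK : 1 ≤ K) (hN : 1 ≤ N)
    (hx : 0 < Lx) : Lw / Lx ≤ Cstar N K := by
  obtain ⟨s, hs⟩ := C.decSets_nonempty ⟨0, hK⟩
  obtain ⟨m₀, -⟩ := Finset.card_pos.1 (hN.trans_eq (C.decSets_card _ s hs).symm)
  obtain ⟨m, hm⟩ := hC.exists_le_condH hN m₀ K ∅ (by simp)
  have h1 : C.P.condH (C.X m) (C.P.subtuple C.W ∅) ≤ Lx := by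
    rw [FinProbSpace.condH, sub_le_iff_le_add]
    exact (C.P.H_pair_le _ _).trans_eq (by rw [C.HX])
  have hN0 : (0 : ℝ) < N := by exact_mod_cast hN
  have hsum : 0 < ∑ i ∈ Finset.range K, (1 / (N : ℝ)) ^ i :=
    Finset.sum_pos (fun i _ => by positivity) ⟨0, Finset.mem_range.2 hK⟩
  rw [Cstar, div_le_div_iff₀ hx hsum]
  have h2 := mul_le_mul_of_nonneg_left (hm.trans h1) hN0.le
  rw [← mul_assoc, mul_div_cancel₀ _ hN0.ne'] at h2
  exact h2

end LDC

namespace LineCode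

variable (K N : ℕ)

/-- The points of the grid `(ℤ/N)^K`, which index the coded symbols. -/
abbrev Point : Type := Fin K → ZMod N

/-- A message: for each point `s` of the grid, an independent vector of `N - 1` bits. -/
abbrev Message : Type := Point K N → {x : ZMod N // x ≠ 0} → ZMod 2

variable {K N}

/-- The bit of a message at position `x`, with the convention that the bit at `0` is `0`. -/
def bit (v : Message K N) (s : Point K N) (x : ZMod N) : ZMod 2 :=
  if h : x = 0 then 0 else v s ⟨x, h⟩

/-- The coded symbol at `q`: its component `s` adds up one bit of every message, in the position
given by `q + s`. -/
def symbol (q : Point K N) (w : Fin K → Message K N) (s : Point K N) : ZMod 2 :=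
  ∑ k, bit (w k) s (q k + s k)

/-- The components of `symbol q` that are not identically zero. -/
def symbolHom (q : Point K N) :
    (Fin K → Message K N) →+ ({s : Point K N // s ≠ -q} → ZMod 2) where
  toFun w s := symbol q w s.1
  map_zero' := by
    ext s
    simp [symbol, bit]
  map_add' v w := by
    ext s
    simp only [symbol, Pi.add_apply, ← Finset.sum_add_distrib]
    refine Finset.sum_congr rfl fun k _ => ?_
    unfold bit
    split_ifs <;> simp

lemma symbol_neg (q : Point K N) (w : Fin K → Message K N) : symbol q w (-q) = 0 := by
  simp [symbol, bit]

lemma symbolHom_eq_iff (q : Point K N) (v w : Fin K → Message K N) :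
    symbol q v = symbol q w ↔ symbolHom q v = symbolHom q w := by
  constructor
  · intro h
    ext s
    exact congrFun h s.1
  · intro h
    ext s
    by_cases hs : s = -q
    · rw [hs, symbol_neg, symbol_neg]
    · exact congrFun h ⟨s, hs⟩

lemma symbolHom_surjective (q : Point K N) : Function.Surjective (symbolHom q) := by
  intro f
  have hex : ∀ s : {s : Point K N // s ≠ -q}, ∃ k, q k + s.1 k ≠ 0 := by
    intro s
    by_contra! h
    exact s.2 (funext fun k => eq_neg_of_add_eq_zero_right (h k))
  choose i hi using hex
  refine ⟨fun k s _ => if h : s ≠ -q then if k = i ⟨s, h⟩ then f ⟨s, h⟩ else 0 else 0, ?_⟩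
  ext s
  change ∑ k, bit _ s.1 (q k + s.1 k) = f s
  rw [Finset.sum_eq_single (i s) (fun k _ hk => ?_) (fun h => absurd (Finset.mem_univ _) h)]
  · simp [bit, hi s, s.2]
  · simp [bit, s.2, hk]

lemma bit_sub_eq (q : Point K N) (k : Fin K) (w : Fin K → Message K N) (s : Point K N)
    (x : ZMod N) :
    bit (w k) s x = symbol (Function.update q k (x - s k)) w s -
      symbol (Function.update q k (-s k)) w s := by
  rw [symbol, symbol, ← Finset.sum_sub_distrib, Finset.sum_eq_single k]
  · simp [bit]
  · intro j _ hj
    simp [hj]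
  · simp

/-- A message is determined by the coded symbols on a line in its direction. -/
lemma message_eq_of_symbol_eq (q : Point K N) (k : Fin K) {v w : Fin K → Message K N}
    (h : ∀ x, symbol (Function.update q k x) v = symbol (Function.update q k x) w) :
    v k = w k := by
  ext s x
  have hbit : ∀ w : Fin K → Message K N, bit (w k) s x = w k s x := fun w => by
    simp [bit, x.2]
  rw [← hbit v, ← hbit w, bit_sub_eq q, bit_sub_eq q, h, h]

variable [NeZero N]

/-- The line through `q` in direction `k`, transported along an enumeration of the points. -/
def line {M : ℕ} (e : Point K N ≃ Fin M) (k : Fin K) (q : Point K N) : Finset (Fin M) :=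
  Finset.univ.image fun x => e (Function.update q k x)

lemma mem_line {M : ℕ} {e : Point K N ≃ Fin M} {k : Fin K} {q : Point K N} {m : Fin M} :
    m ∈ line e k q ↔ ∃ x, e (Function.update q k x) = m := by
  simp [line]

lemma card_line {M : ℕ} (e : Point K N ≃ Fin M) (k : Fin K) (q : Point K N) :
    (line e k q).card = N := by
  refine (Finset.card_image_of_injective _
    (e.injective.comp (Function.update_injective q k))).trans ?_
  rw [Finset.card_univ, ZMod.card]

lemma self_mem_line {M : ℕ} (e : Point K N ≃ Fin M) (k : Fin K) (m : Fin M) :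
    m ∈ line e k (e.symm m) :=
  mem_line.2 ⟨e.symm m k, by simp⟩

lemma line_eq_of_mem {M : ℕ} {e : Point K N ≃ Fin M} {k : Fin K} {q : Point K N} {m : Fin M}
    (h : m ∈ line e k q) : line e k q = line e k (e.symm m) := by
  obtain ⟨x, rfl⟩ := mem_line.1 h
  simp [line]

lemma filter_mem_lines {M : ℕ} (e : Point K N ≃ Fin M) (k : Fin K) (m : Fin M) :
    ((Finset.univ.image (line e k)).filter fun s => m ∈ s) = {line e k (e.symm m)} := by
  ext s
  simp only [Finset.mem_filter, Finset.mem_image, Finset.mem_univ, true_and,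
    Finset.mem_singleton]
  constructor
  · rintro ⟨⟨q, rfl⟩, h⟩
    exact line_eq_of_mem h
  · rintro rfl
    exact ⟨⟨_, rfl⟩, self_mem_line e k m⟩

lemma H_coord (k : Fin K) :
    (FinProbSpace.uniform (Fin K → Message K N)).H (fun w => w k) =
      (N : ℝ) ^ K * ((N : ℝ) - 1) := by
  have h := FinProbSpace.H_uniform_hom
    (f := Pi.evalAddMonoidHom (fun _ : Fin K => Message K N) k) (Function.surjective_eval k)
  refine h.trans ?_
  have hN : 1 ≤ N := NeZero.one_le
  simp only [Fintype.card_fun, ZMod.card, Fintype.card_fin, Fintype.card_subtype_compl,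
    Fintype.card_unique, ← pow_mul]
  rw [Nat.cast_pow, Real.logb_pow]
  simp [hN, mul_comm]

lemma H_symbol (q : Point K N) :
    (FinProbSpace.uniform (Fin K → Message K N)).H (symbol q) = (N : ℝ) ^ K - 1 := by
  have h1 : (FinProbSpace.uniform (Fin K → Message K N)).H (symbol q) =
      (FinProbSpace.uniform (Fin K → Message K N)).H (symbolHom q) :=
    FinProbSpace.H_congr _ fun v w => symbolHom_eq_iff q v w
  have h2 := FinProbSpace.H_uniform_hom (symbolHom_surjective q)
  refine h1.trans (h2.trans ?_)
  have hN : 1 ≤ N ^ K := NeZero.one_le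
  simp only [Fintype.card_fun, ZMod.card, Fintype.card_fin, Fintype.card_subtype_compl,
    Fintype.card_unique]
  rw [Nat.cast_pow, Real.logb_pow]
  simp [hN]

lemma iIndep_coord :
    (FinProbSpace.uniform (Fin K → Message K N)).iIndep fun k w => w k := by
  intro a
  have h := FinProbSpace.prob_uniform_hom (f := AddMonoidHom.id (Fin K → Message K N))
    Function.surjective_id a
  have hk : ∀ k, (FinProbSpace.uniform (Fin K → Message K N)).prob (fun w => w k) (a k) =
      (Fintype.card (Message K N) : ℝ)⁻¹ := fun k =>
    FinProbSpace.prob_uniform_hom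
      (f := Pi.evalAddMonoidHom (fun _ : Fin K => Message K N) k) (Function.surjective_eval k) _
  refine h.trans ?_
  rw [Finset.prod_congr rfl fun k _ => hk k, Finset.prod_const, Fintype.card_fun,
    Finset.card_univ, Nat.cast_pow, inv_pow]

/-- The code whose coded symbols are the points of `(ℤ/N)^K` and whose decoding sets for the
`k`-th message are the lines in direction `k`. -/
def code (K N : ℕ) [NeZero N] :
    LDC K N (Fintype.card (Point K N)) ((N : ℝ) ^ K * ((N : ℝ) - 1)) ((N : ℝ) ^ K - 1) where
  P := FinProbSpace.uniform (Fin K → Message K N)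
  V := Message K N
  V' := Point K N → ZMod 2
  W k w := w k
  X m := symbol ((Fintype.equivFin (Point K N)).symm m)
  indep := iIndep_coord
  HW := H_coord
  coded_fn m := ⟨symbol ((Fintype.equivFin (Point K N)).symm m), fun _ => rfl⟩
  HX _ := H_symbol _
  decSets k := Finset.univ.image (line (Fintype.equivFin (Point K N)) k)
  decSets_nonempty k := Finset.univ_nonempty.image _
  decSets_card k s hs := by
    obtain ⟨q, -, rfl⟩ := Finset.mem_image.1 hs
    exact card_line _ k q
  decodes k s hs := by
    obtain ⟨q, -, rfl⟩ := Finset.mem_image.1 hs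
    refine FinProbSpace.condH_eq_zero_of_determined _ fun v w h => ?_
    refine message_eq_of_symbol_eq q k fun x => ?_
    have hx := congrFun h ⟨_, mem_line.2 ⟨x, rfl⟩⟩
    simpa [FinProbSpace.tuple] using hx

lemma code_isSmooth (K N : ℕ) [NeZero N] : (code K N).IsSmooth := by
  intro k m m'
  simp only [code]
  rw [filter_mem_lines, filter_mem_lines, Finset.card_singleton, Finset.card_singleton]

end LineCode

lemma Cstar_eq {K N : ℕ} (hN : 2 ≤ N) :
    Cstar N K = (N : ℝ) ^ K * ((N : ℝ) - 1) / ((N : ℝ) ^ K - 1) := by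
  have hN1 : (1 : ℝ) < N := by exact_mod_cast hN
  have hN0 : (N : ℝ) ≠ 0 := by positivity
  have hN1' : (N : ℝ) - 1 ≠ 0 := (sub_pos.2 hN1).ne'
  have h1 : 1 / (N : ℝ) ≠ 1 := by
    rw [Ne, div_eq_one_iff_eq hN0]
    exact hN1.ne
  have h2 : ∑ j ∈ Finset.range K, (1 / (N : ℝ)) ^ j =
      N * ((N : ℝ) ^ K - 1) / ((N : ℝ) ^ K * ((N : ℝ) - 1)) := by
    rw [geom_sum_eq h1, div_eq_div_iff (sub_ne_zero.2 h1) (by positivity), one_div, inv_pow]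
    field_simp
    ring
  rw [Cstar, h2, div_div_eq_mul_div, mul_div_mul_left _ _ hN0]

/-- Capacity of perfectly smooth LDCs, Corollary 1: for `N ≥ 2`, `K ≥ 1`,
the supremum over all code lengths `M` and all SLDCs of the symbol rate `Lw / Lx` equals
`C*(N, K)`, and it is attained. -/
theorem sldc_capacity (K N : ℕ) (hK : 1 ≤ K) (hN : 2 ≤ N) :
    IsGreatest {r : ℝ | ∃ (M : ℕ) (Lw Lx : ℝ), 0 < Lw ∧ 0 < Lx ∧
      ∃ C : LDC K N M Lw Lx, C.IsSmooth ∧ r = Lw / Lx} (Cstar N K) := by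
  constructor
  · have hN1 : (1 : ℝ) < N := by exact_mod_cast hN
    have : NeZero N := ⟨by omega⟩
    exact ⟨_, _, _, mul_pos (by positivity) (sub_pos.2 hN1),
      sub_pos.2 (one_lt_pow₀ hN1 (by omega)), LineCode.code K N, LineCode.code_isSmooth K N,
      Cstar_eq hN⟩
  · rintro r ⟨M, Lw, Lx, -, hx, C, hC, rfl⟩
    exact (hC.isUniversal (by omega)).rate_le hK (by omega) hx
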